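/- Let S be a safe separator of a finite simple graph G, i.e., tw(G ∪ K(S)) = tw(G). Then tw(G) is the larger of |S| − 1 and the maximum over the connected components C of G minus S of tw(G[C ∪ S] ∪ K(S)). -/

import Mathlib

/-- A tree-decomposition of a graph `G` indexed by nodes of type `ι`. -/
structure TreeDecomp {V : Type} (G : SimpleGraph V) (ι : Type) where
  tree : SimpleGraph ι
  isTree : tree.IsTree
  bag : ι → Finset V
  bags_cover : ∀ v : V, ∃ i : ι, v ∈ bag i
  edges_covered : ∀ ⦃u v : V⦄, G.Adj u v → ∃ i : ι, u ∈ bag i ∧ v ∈ bag i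
  bags_connected : ∀ v : V, (tree.induce {i : ι | v ∈ bag i}).Connected

/-- The treewidth of `G`: the smallest `k` such that `G` has a tree-decomposition
all of whose bags have at most `k + 1` vertices (i.e. of width at most `k`). -/
noncomputable def treewidth {V : Type} (G : SimpleGraph V) : ℕ :=
  sInf { k : ℕ | ∃ (ι : Type) (td : TreeDecomp G ι), ∀ i : ι, (td.bag i).card ≤ k + 1 }

/-- The neighborhood `N_G(C)` of a vertex set `C`. -/
def nbhd {V : Type} (G : SimpleGraph V) (C : Set V) : Set V :=
  {v : V | v ∉ C ∧ ∃ u ∈ C, G.Adj u v}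

/-- `S` separates `a` from `b` in `G`: `a, b ∉ S` and every walk from `a` to `b` meets `S`
(so `a` and `b` lie in distinct components of `G` minus `S`). -/
def Separates {V : Type} (G : SimpleGraph V) (S : Set V) (a b : V) : Prop :=
  a ∉ S ∧ b ∉ S ∧ ∀ p : G.Walk a b, ∃ v ∈ p.support, v ∈ S

/-- `C` is a connected component of `G` minus `S`. -/
def IsCompOf {V : Type} (G : SimpleGraph V) (S : Set V) (C : Set V) : Prop :=
  C.Nonempty ∧ Disjoint C S ∧ (G.induce C).Connected ∧
    ∀ D : Set V, C ⊆ D → Disjoint D S → (G.induce D).Connected → D = C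

/-- `S` is a separator of `G`: `G` minus `S` has more than one connected component. -/
def IsSeparator {V : Type} (G : SimpleGraph V) (S : Set V) : Prop :=
  ∃ C D : Set V, IsCompOf G S C ∧ IsCompOf G S D ∧ C ≠ D

/-- `C` is a full component of `S` in `G`. -/
def IsFullCompOf {V : Type} (G : SimpleGraph V) (S : Set V) (C : Set V) : Prop :=
  IsCompOf G S C ∧ nbhd G C = S

/-- `S` is a minimal separator of `G`: it has at least two full components. -/
def IsMinSep {V : Type} (G : SimpleGraph V) (S : Set V) : Prop :=
  ∃ C D : Set V, IsFullCompOf G S C ∧ IsFullCompOf G S D ∧ C ≠ D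

/-- `R` crosses `S` if `R` separates some pair of vertices of `S`. -/
def Crosses {V : Type} (G : SimpleGraph V) (R S : Set V) : Prop :=
  ∃ a b : V, a ∈ S ∧ b ∈ S ∧ Separates G R a b

/-- `G` is chordal: every cycle with more than 3 vertices has a chord. -/
def IsChordal {V : Type} (G : SimpleGraph V) : Prop :=
  ∀ ⦃v : V⦄ (c : G.Walk v v), c.IsCycle → 3 < c.length →
    ∃ u w : V, u ∈ c.support ∧ w ∈ c.support ∧ G.Adj u w ∧ s(u, w) ∉ c.edges

/-- `H` is a triangulation of `G`. -/
def IsTriangulationOf {V : Type} (H G : SimpleGraph V) : Prop :=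
  IsChordal H ∧ G ≤ H

/-- `H` is a minimal triangulation of `G`. -/
def IsMinimalTriangulationOf {V : Type} (H G : SimpleGraph V) : Prop :=
  IsTriangulationOf H G ∧ ∀ H' : SimpleGraph V, IsTriangulationOf H' G → H' ≤ H → H' = H

/-- `K(S)`: the graph on the same vertex type whose edges join all pairs of
distinct vertices of `S`. -/
def completeOn {V : Type} (S : Set V) : SimpleGraph V :=
  SimpleGraph.fromRel (fun a b => a ∈ S ∧ b ∈ S)

/-- `s` is a maximal clique of `G`. -/
def IsMaximalClique {V : Type} (G : SimpleGraph V) (s : Set V) : Prop :=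
  G.IsClique s ∧ ∀ t : Set V, G.IsClique t → s ⊆ t → s = t

/-- `fill G td`: fill every bag of the tree-decomposition `td` into a clique. -/
def fill {V ι : Type} (G : SimpleGraph V) (td : TreeDecomp G ι) : SimpleGraph V :=
  G ⊔ SimpleGraph.fromRel (fun a b => ∃ i : ι, a ∈ td.bag i ∧ b ∈ td.bag i)

/-- The nodes of the maximal subtree `T(i,j)` of the tree containing `i` but not `j`
(for adjacent `i`, `j`): the nodes reachable from `i` after deleting the edge `{i, j}`. -/
def sideNodes {V ι : Type} {G : SimpleGraph V} (td : TreeDecomp G ι) (i j : ι) : Set ι :=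
  {t : ι | (td.tree.deleteEdges {s(i, j)}).Reachable i t}

/-- `V(i,j)`: the union of the bags of nodes in `T(i,j)`, with the vertices of the
bag of `j` removed. -/
def sideVerts {V ι : Type} {G : SimpleGraph V} (td : TreeDecomp G ι) (i j : ι) : Set V :=
  (⋃ t ∈ sideNodes td i j, (td.bag t : Set V)) \ (td.bag j : Set V)

/-- A perfect elimination order of `G`. -/
def IsPerfectElimOrder {V : Type} [Fintype V] (G : SimpleGraph V)
    (e : Fin (Fintype.card V) ≃ V) : Prop :=
  ∀ i : Fin (Fintype.card V),
    G.IsClique {u : V | G.Adj (e i) u ∧ ∃ j : Fin (Fintype.card V), i < j ∧ e j = u}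

/-- `H` is a minor of `G`, via the branch-set (minor model) characterization. -/
def IsMinorOf {W V : Type} (H : SimpleGraph W) (G : SimpleGraph V) : Prop :=
  ∃ B : W → Set V,
    (∀ w : W, (B w).Nonempty) ∧
    (∀ w : W, (G.induce (B w)).Connected) ∧
    (Pairwise fun w₁ w₂ : W => Disjoint (B w₁) (B w₂)) ∧
    ∀ ⦃w₁ w₂ : W⦄, H.Adj w₁ w₂ → ∃ a ∈ B w₁, ∃ b ∈ B w₂, G.Adj a b

/-- There is a clique minor of `G` minus `C` rooted on `R`, given by branch sets
`B v ∋ v` for `v ∈ R`: disjoint from `C`, pairwise disjoint, each connected, with an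
edge of `G` between every two of them. -/
def HasCliqueMinorRootedAvoiding {V : Type} (G : SimpleGraph V) (R C : Set V) : Prop :=
  ∃ B : R → Set V,
    (∀ v : R, (v : V) ∈ B v) ∧
    (∀ v : R, Disjoint (B v) C) ∧
    (∀ v : R, (G.induce (B v)).Connected) ∧
    (∀ u v : R, u ≠ v → Disjoint (B u) (B v)) ∧
    (∀ u v : R, u ≠ v → ∃ a ∈ B u, ∃ b ∈ B v, G.Adj a b)

/-- `S` is a minor-safe separator of `G`: for every component `C` of `G` minus `S`,
there is a clique minor of `G` minus `C` rooted on `N_G(C)`. -/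
def MinorSafe {V : Type} (G : SimpleGraph V) (S : Set V) : Prop :=
  ∀ C : Set V, IsCompOf G S C → HasCliqueMinorRootedAvoiding G (nbhd G C) C

namespace SimpleGraph

variable {α β : Type}

lemma Reachable.map_of_adj {G : SimpleGraph α} {H : SimpleGraph β} (f : α → β)
    (hf : ∀ a b, G.Adj a b → H.Reachable (f a) (f b)) {a b : α} (h : G.Reachable a b) :
    H.Reachable (f a) (f b) := by
  obtain ⟨p⟩ := h
  induction p with
  | nil => rfl
  | cons hadj _ ih => exact (hf _ _ hadj).trans ih

/-- A walk into a set `X` yields a path that meets `X` only in its endpoint. -/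
lemma Walk.exists_isPath_to_set {T : SimpleGraph α} {X : Set α} {i a : α} (p : T.Walk i a)
    (ha : a ∈ X) : ∃ j ∈ X, ∃ q : T.Walk i j, q.IsPath ∧ ∀ x ∈ q.support, x ∈ X → x = j := by
  classical
  induction p with
  | nil => exact ⟨_, ha, .nil, .nil, by simp⟩
  | @cons u v w h p ih =>
    obtain ⟨j, hj, q, -, hq⟩ := ih ha
    by_cases hu : u ∈ X
    · exact ⟨u, hu, .nil, .nil, by simp⟩
    · refine ⟨j, hj, (Walk.cons h q).bypass, Walk.bypass_isPath _, fun x hx hxX => ?_⟩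
      have hx' := Walk.support_bypass_subset_support _ hx
      rw [Walk.support_cons, List.mem_cons] at hx'
      rcases hx' with rfl | hx'
      · exact absurd hxX hu
      · exact hq x hx' hxX

lemma Connected.exists_isPath_support_subset {T : SimpleGraph α} {X : Set α}
    (hX : (T.induce X).Connected) {a b : α} (ha : a ∈ X) (hb : b ∈ X) :
    ∃ p : T.Walk a b, p.IsPath ∧ ∀ x ∈ p.support, x ∈ X := by
  classical
  obtain ⟨p⟩ := hX.preconnected ⟨a, ha⟩ ⟨b, hb⟩
  let q : T.Walk a b := p.map (Embedding.induce X).toHom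
  refine ⟨q.bypass, Walk.bypass_isPath _, fun x hx => ?_⟩
  have hx' : x ∈ (p.map (Embedding.induce X).toHom).support :=
    Walk.support_bypass_subset_support _ hx
  rw [Walk.support_map, List.mem_map] at hx'
  obtain ⟨y, -, rfl⟩ := hx'
  exact y.2

/-- In a tree, every node `i` has a gate `j` into a subtree `X`: every subtree that contains `i`
and meets `X` contains `j`. -/
lemma IsTree.exists_gate {T : SimpleGraph α} (hT : T.IsTree) {X : Set α}
    (hX : (T.induce X).Connected) (i : α) :
    ∃ j ∈ X, ∀ Y : Set α, (T.induce Y).Connected → i ∈ Y → (X ∩ Y).Nonempty → j ∈ Y := by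
  obtain ⟨a, ha⟩ := hX.nonempty
  obtain ⟨p⟩ := hT.connected.preconnected i a
  obtain ⟨j, hj, q, hq, hqX⟩ := p.exists_isPath_to_set ha
  refine ⟨j, hj, fun Y hY hi ⟨t, htX, htY⟩ => ?_⟩
  obtain ⟨r, hr, hrX⟩ := hX.exists_isPath_support_subset hj htX
  obtain ⟨s, hs, hsY⟩ := hY.exists_isPath_support_subset hi htY
  have hqr : (q.append r).IsPath := by
    rw [Walk.isPath_def, Walk.support_append, List.nodup_append']
    refine ⟨hq.support_nodup, hr.support_nodup.tail, fun x hxq hxr => ?_⟩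
    obtain rfl := hqX x hxq (hrX x (List.mem_of_mem_tail hxr))
    have hnd := hr.support_nodup
    rw [← Walk.cons_tail_support, List.nodup_cons] at hnd
    exact hnd.1 hxr
  have heq : s = q.append r :=
    congrArg Subtype.val ((hT.isAcyclic.subsingleton_path i t).elim ⟨s, hs⟩ ⟨_, hqr⟩)
  apply hsY
  rw [heq, Walk.mem_support_append_iff]
  exact Or.inl q.end_mem_support

section Star

variable {I : Type} {ι : I → Type} (T : ∀ c, SimpleGraph (ι c)) (r : ∀ c, ι c)

/-- Adjacency in `starGlue`. -/
inductive StarAdj : Option (Σ c, ι c) → Option (Σ c, ι c) → Prop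
  | edge (c : I) (i j : ι c) : (T c).Adj i j → StarAdj (some ⟨c, i⟩) (some ⟨c, j⟩)
  | down (c : I) : StarAdj none (some ⟨c, r c⟩)
  | up (c : I) : StarAdj (some ⟨c, r c⟩) none

/-- The disjoint union of the graphs `T c`, together with a new vertex `none` joined to each
root `r c`. -/
def starGlue : SimpleGraph (Option (Σ c, ι c)) where
  Adj := StarAdj T r
  symm := ⟨by
    rintro _ _ (⟨c, i, j, h⟩ | c | c)
    · exact .edge c j i h.symm
    · exact .up c
    · exact .down c⟩
  loopless := ⟨by
    rintro (_ | ⟨c, i⟩) h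
    · cases h
    · cases h with
      | edge _ _ _ h => exact (T c).irrefl h⟩

variable {T r}

lemma starGlue_reachable_of_branch {X : Set (Option (Σ c, ι c))} {c : I}
    (hX : ((T c).induce {i | some ⟨c, i⟩ ∈ X}).Preconnected) {i j : ι c}
    (hi : some ⟨c, i⟩ ∈ X) (hj : some ⟨c, j⟩ ∈ X) :
    ((starGlue T r).induce X).Reachable ⟨some ⟨c, i⟩, hi⟩ ⟨some ⟨c, j⟩, hj⟩ :=
  (hX ⟨i, hi⟩ ⟨j, hj⟩).map_of_adj (H := (starGlue T r).induce X)
    (fun x : {i : ι c | some (Sigma.mk c i) ∈ X} => ⟨some ⟨c, x.1⟩, x.2⟩)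
    fun a b h => Adj.reachable (induce_adj.2 (StarAdj.edge c a.1 b.1 h))

lemma starGlue_induce_connected {X : Set (Option (Σ c, ι c))} (hnone : none ∈ X)
    (hroot : ∀ c, some ⟨c, r c⟩ ∈ X)
    (hX : ∀ c, ((T c).induce {i | some ⟨c, i⟩ ∈ X}).Preconnected) :
    ((starGlue T r).induce X).Connected := by
  rw [connected_iff_exists_forall_reachable]
  refine ⟨⟨none, hnone⟩, ?_⟩
  rintro ⟨_ | ⟨c, i⟩, hi⟩
  · rfl
  · have hadj : ((starGlue T r).induce X).Adj ⟨none, hnone⟩ ⟨some ⟨c, r c⟩, hroot c⟩ :=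
      StarAdj.down c
    exact hadj.reachable.trans (starGlue_reachable_of_branch (hX c) _ _)

lemma starGlue_induce_connected_of_branch {X : Set (Option (Σ c, ι c))} {c : I}
    (hsub : ∀ x ∈ X, ∃ i, x = some ⟨c, i⟩)
    (hX : ((T c).induce {i | some ⟨c, i⟩ ∈ X}).Connected) :
    ((starGlue T r).induce X).Connected := by
  obtain ⟨i, hi⟩ := hX.nonempty
  rw [connected_iff_exists_forall_reachable]
  refine ⟨⟨_, hi⟩, ?_⟩
  rintro ⟨x, hx⟩
  obtain ⟨j, rfl⟩ := hsub x hx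
  exact starGlue_reachable_of_branch hX.preconnected _ _

lemma starGlue_connected (hT : ∀ c, (T c).Connected) : (starGlue T r).Connected := by
  rw [connected_iff_exists_forall_reachable]
  refine ⟨none, ?_⟩
  rintro (_ | ⟨c, i⟩)
  · rfl
  · have hadj : (starGlue T r).Adj none (some ⟨c, r c⟩) := StarAdj.down c
    exact hadj.reachable.trans (((hT c).preconnected (r c) i).map_of_adj (H := starGlue T r)
      (fun x => some ⟨c, x⟩) fun a b h => Adj.reachable (StarAdj.edge c a b h))

lemma starGlue_isBridge_root (c : I) : (starGlue T r).IsBridge s(none, some ⟨c, r c⟩) := by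
  rw [isBridge_iff]
  intro h
  let f : Option (Σ c, ι c) → Prop := fun x => ∃ i, x = some ⟨c, i⟩
  have hf : (⊥ : SimpleGraph Prop).Reachable (f none) (f (some ⟨c, r c⟩)) := by
    refine h.map_of_adj f ?_
    intro a b hab
    rw [deleteEdges_adj] at hab
    obtain ⟨hab, hne⟩ := hab
    suffices f a = f b by rw [this]
    cases hab with
    | edge d i j h =>
      by_cases hd : d = c
      · subst hd; simp [f]
      · simp [f, hd]
    | down d =>
      have hd : d ≠ c := by rintro rfl; simp at hne
      simp [f, hd]
    | up d =>
      have hd : d ≠ c := by rintro rfl; simp at hne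
      simp [f, hd]
  rw [reachable_bot] at hf
  simp [f] at hf

lemma starGlue_isBridge_branch {c : I} {i j : ι c} (hij : (T c).IsBridge s(i, j)) :
    (starGlue T r).IsBridge s(some ⟨c, i⟩, some ⟨c, j⟩) := by
  classical
  rw [isBridge_iff] at hij ⊢
  intro h
  let f : Option (Σ c, ι c) → ι c := fun x =>
    x.elim (r c) fun y => if hy : y.1 = c then hy ▸ y.2 else r c
  have hf : ((T c).deleteEdges {s(i, j)}).Reachable (f (some ⟨c, i⟩)) (f (some ⟨c, j⟩)) := by
    refine h.map_of_adj f ?_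
    intro a b hab
    rw [deleteEdges_adj] at hab
    obtain ⟨hab, hne⟩ := hab
    cases hab with
    | edge d k l hadj =>
      by_cases hd : d = c
      · subst hd
        have hkl : ((T d).deleteEdges {s(i, j)}).Adj k l := by
          rw [deleteEdges_adj]
          refine ⟨hadj, ?_⟩
          simpa using hne
        simpa [f] using hkl.reachable
      · simp [f, hd]
    | down d =>
      by_cases hd : d = c
      · subst hd; simp [f]
      · simp [f, hd]
    | up d =>
      by_cases hd : d = c
      · subst hd; simp [f]
      · simp [f, hd]
  exact hij (by simpa [f] using hf)

lemma starGlue_isTree (hT : ∀ c, (T c).IsTree) : (starGlue T r).IsTree := by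
  refine ⟨starGlue_connected fun c => (hT c).connected, ?_⟩
  rw [isAcyclic_iff_forall_adj_isBridge]
  intro a b hab
  cases hab with
  | edge c i j h =>
    exact starGlue_isBridge_branch (isAcyclic_iff_forall_adj_isBridge.1 (hT c).isAcyclic h)
  | down c => exact starGlue_isBridge_root c
  | up c =>
    rw [Sym2.eq_swap]
    exact starGlue_isBridge_root c

end Star

end SimpleGraph

section Treewidth

variable {V : Type}

lemma completeOn_adj {S : Set V} {a b : V} :
    (completeOn S).Adj a b ↔ a ≠ b ∧ a ∈ S ∧ b ∈ S := by
  rw [completeOn, SimpleGraph.fromRel_adj]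
  tauto

/-- The one-node tree-decomposition. -/
def TreeDecomp.trivial [Fintype V] (G : SimpleGraph V) : TreeDecomp G Unit where
  tree := ⊥
  isTree := .of_subsingleton
  bag _ := Finset.univ
  bags_cover _ := ⟨(), Finset.mem_univ _⟩
  edges_covered _ _ _ := ⟨(), Finset.mem_univ _, Finset.mem_univ _⟩
  bags_connected v := by
    have : Nonempty {i : Unit | v ∈ (Finset.univ : Finset V)} := ⟨⟨(), Finset.mem_univ v⟩⟩
    exact ⟨.of_subsingleton⟩

lemma exists_treeDecomp_card_le_treewidth [Finite V] (G : SimpleGraph V) :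
    ∃ (ι : Type) (td : TreeDecomp G ι), ∀ i, (td.bag i).card ≤ treewidth G + 1 := by
  have := Fintype.ofFinite V
  exact Nat.sInf_mem (s := {k | ∃ (ι : Type) (td : TreeDecomp G ι), ∀ i, (td.bag i).card ≤ k + 1})
    ⟨Fintype.card V, Unit, .trivial G, fun _ => (Finset.card_le_univ _).trans (Nat.le_succ _)⟩

lemma treewidth_le_of_treeDecomp {G : SimpleGraph V} {ι : Type} (td : TreeDecomp G ι) {k : ℕ}
    (h : ∀ i, (td.bag i).card ≤ k + 1) : treewidth G ≤ k :=
  Nat.sInf_le ⟨ι, td, h⟩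

/-- Every finite clique is contained in a bag. -/
lemma TreeDecomp.exists_clique_subset_bag {G : SimpleGraph V} {ι : Type} (td : TreeDecomp G ι)
    (A : Finset V) (hA : G.IsClique (A : Set V)) : ∃ i, A ⊆ td.bag i := by
  classical
  induction A using Finset.induction_on with
  | empty =>
    obtain ⟨i⟩ := td.isTree.connected.nonempty
    exact ⟨i, Finset.empty_subset _⟩
  | insert v A hv ih =>
    obtain ⟨i, hi⟩ := ih (hA.subset (by simp))
    obtain ⟨j, hj, hgate⟩ := td.isTree.exists_gate (td.bags_connected v) i
    refine ⟨j, Finset.insert_subset hj fun u hu => ?_⟩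
    have huv : G.Adj v u := hA (by simp) (by simp [hu]) (by rintro rfl; exact hv hu)
    obtain ⟨t, hvt, hut⟩ := td.edges_covered huv
    exact hgate _ (td.bags_connected u) (hi hu) ⟨t, hvt, hut⟩

lemma ncard_le_treewidth_of_isClique [Finite V] {G : SimpleGraph V} {S : Set V}
    (hS : G.IsClique S) : S.ncard - 1 ≤ treewidth G := by
  classical
  have := Fintype.ofFinite V
  obtain ⟨ι, td, htd⟩ := exists_treeDecomp_card_le_treewidth G
  obtain ⟨i, hi⟩ := td.exists_clique_subset_bag S.toFinset (by simpa using hS)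
  have := (Finset.card_le_card hi).trans (htd i)
  rw [← Set.ncard_eq_toFinset_card'] at this
  omega

/-- Restriction of a tree-decomposition along an injective homomorphism. -/
noncomputable def TreeDecomp.comap {W : Type} {G : SimpleGraph V} {H : SimpleGraph W} {ι : Type}
    (td : TreeDecomp G ι) (f : W ↪ V) (hf : ∀ a b, H.Adj a b → G.Adj (f a) (f b)) :
    TreeDecomp H ι where
  tree := td.tree
  isTree := td.isTree
  bag i := (td.bag i).preimage f f.injective.injOn
  bags_cover v := by simpa using td.bags_cover (f v)
  edges_covered u v h := by simpa using td.edges_covered (hf u v h)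
  bags_connected v := by
    have hset : {i | v ∈ (td.bag i).preimage f f.injective.injOn} = {i | f v ∈ td.bag i} :=
      Set.ext fun i => Finset.mem_preimage
    rw [hset]
    exact td.bags_connected (f v)

lemma treewidth_le_of_embedding {W : Type} [Finite V] {G : SimpleGraph V} {H : SimpleGraph W}
    (f : W ↪ V) (hf : ∀ a b, H.Adj a b → G.Adj (f a) (f b)) : treewidth H ≤ treewidth G := by
  obtain ⟨ι, td, htd⟩ := exists_treeDecomp_card_le_treewidth G
  refine treewidth_le_of_treeDecomp (td.comap f hf) fun i => le_trans ?_ (htd i)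
  rw [← Finset.card_map f]
  exact Finset.card_le_card fun x hx => by
    obtain ⟨y, hy, rfl⟩ := Finset.mem_map.1 hx
    exact (Finset.mem_preimage (hf := f.injective.injOn)).1 hy

lemma exists_isCompOf_mem [Finite V] (G : SimpleGraph V) {S : Set V} {v : V} (hv : v ∉ S) :
    ∃ C, IsCompOf G S C ∧ v ∈ C := by
  obtain ⟨C, hC, hmax⟩ := Finite.exists_le_maximal
    (p := fun D : Set V => Disjoint D S ∧ (G.induce D).Connected) (a := {v})
    ⟨by simpa using hv, by
      have : Nonempty ({v} : Set V) := ⟨⟨v, rfl⟩⟩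
      exact ⟨.of_subsingleton⟩⟩
  have hvC : v ∈ C := hC rfl
  exact ⟨C, ⟨⟨v, hvC⟩, hmax.prop.1, hmax.prop.2, fun D hCD hD hconn =>
    (hmax.le_of_ge ⟨hD, hconn⟩ hCD).antisymm hCD⟩, hvC⟩

lemma IsCompOf.eq_of_mem {G : SimpleGraph V} {S C D : Set V} (hC : IsCompOf G S C)
    (hD : IsCompOf G S D) {v : V} (hvC : v ∈ C) (hvD : v ∈ D) : C = D := by
  have hconn := SimpleGraph.induce_union_connected hC.2.2.1.preconnected hD.2.2.1.preconnected
    ⟨v, hvC, hvD⟩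
  have hdisj : Disjoint (C ∪ D) S := hC.2.1.union_left hD.2.1
  rw [← hC.2.2.2 _ Set.subset_union_left hdisj hconn]
  exact hD.2.2.2 _ Set.subset_union_right hdisj hconn

lemma IsCompOf.mem_union_of_adj {G : SimpleGraph V} {S C : Set V} (hC : IsCompOf G S C)
    {u v : V} (hu : u ∈ C) (huv : G.Adj u v) : v ∈ C ∪ S := by
  by_cases hv : v ∈ S
  · exact Or.inr hv
  left
  have hconn := SimpleGraph.induce_union_connected hC.2.2.1.preconnected
    (SimpleGraph.induce_pair_connected_of_adj huv).preconnected ⟨u, hu, by simp⟩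
  have hdisj : Disjoint (C ∪ {u, v}) S := by
    refine hC.2.1.union_left ?_
    simp [Set.disjoint_left, hv, Set.disjoint_left.1 hC.2.1 hu]
  rw [← hC.2.2.2 _ Set.subset_union_left hdisj hconn]
  simp

/-- The graph `G[C ∪ S] ∪ K(S)`. -/
abbrev torso (G : SimpleGraph V) (S C : Set V) : SimpleGraph ↑(C ∪ S) :=
  G.induce (C ∪ S) ⊔ completeOn {x : ↑(C ∪ S) | (x : V) ∈ S}

lemma torso_adj {G : SimpleGraph V} {S C : Set V} {a b : ↑(C ∪ S)} :
    (torso G S C).Adj a b ↔ (G ⊔ completeOn S).Adj a b := by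
  simp [completeOn_adj, Subtype.ext_iff]

/-- Tree-decompositions of the torsos of all components, each with a bag containing `S`,
glued along a new node with bag `S`. -/
noncomputable def TreeDecomp.glue [Fintype V] {G : SimpleGraph V} {S : Set V}
    {ι : {C // IsCompOf G S C} → Type}
    (td : ∀ C : {C // IsCompOf G S C}, TreeDecomp (torso G S C.1) (ι C)) (r : ∀ C, ι C)
    (hr : ∀ C (x : ↑(C.1 ∪ S)), (x : V) ∈ S → x ∈ (td C).bag (r C)) :
    TreeDecomp (G ⊔ completeOn S) (Option (Σ C, ι C)) where
  tree := SimpleGraph.starGlue (fun C => (td C).tree) r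
  isTree := SimpleGraph.starGlue_isTree fun C => (td C).isTree
  bag x := x.elim S.toFinite.toFinset fun y => ((td y.1).bag y.2).map (.subtype _)
  bags_cover v := by
    by_cases hv : v ∈ S
    · exact ⟨none, by simpa using hv⟩
    · obtain ⟨C, hC, hvC⟩ := exists_isCompOf_mem G hv
      obtain ⟨i, hi⟩ := (td ⟨C, hC⟩).bags_cover ⟨v, Or.inl hvC⟩
      exact ⟨some ⟨⟨C, hC⟩, i⟩, Finset.mem_map_of_mem _ hi⟩
  edges_covered u v huv := by
    have key : ∀ C : {C // IsCompOf G S C}, u ∈ C.1 ∪ S → v ∈ C.1 ∪ S →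
        ∃ i : Option (Σ C, ι C),
          u ∈ i.elim S.toFinite.toFinset (fun y => ((td y.1).bag y.2).map (.subtype _)) ∧
          v ∈ i.elim S.toFinite.toFinset (fun y => ((td y.1).bag y.2).map (.subtype _)) := by
      intro C hu hv
      obtain ⟨i, hui, hvi⟩ := (td C).edges_covered (u := ⟨u, hu⟩) (v := ⟨v, hv⟩)
        (torso_adj.2 huv)
      exact ⟨some ⟨C, i⟩, Finset.mem_map_of_mem (.subtype _) hui,
        Finset.mem_map_of_mem (.subtype _) hvi⟩
    by_cases hu : u ∈ S
    · by_cases hv : v ∈ S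
      · exact ⟨none, by simpa using hu, by simpa using hv⟩
      · obtain ⟨C, hC, hvC⟩ := exists_isCompOf_mem G hv
        exact key ⟨C, hC⟩ (Or.inr hu) (Or.inl hvC)
    · obtain ⟨C, hC, huC⟩ := exists_isCompOf_mem G hu
      refine key ⟨C, hC⟩ (Or.inl huC) ?_
      rcases huv with huv | huv
      · exact hC.mem_union_of_adj huC huv
      · exact absurd (completeOn_adj.1 huv).2.1 hu
  bags_connected v := by
    have hbranch : ∀ (C : {C // IsCompOf G S C}) (hv : v ∈ C.1 ∪ S),
        {i | (⟨v, hv⟩ : ↑(C.1 ∪ S)) ∈ (td C).bag i} =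
          {i | v ∈ ((td C).bag i).map (.subtype _)} := by
      intro C hv
      ext i
      simp only [Set.mem_ofPred_eq, Finset.mem_map, Function.Embedding.subtype_apply,
        Subtype.exists, exists_and_right, exists_eq_right]
      exact ⟨fun h => ⟨hv, h⟩, fun ⟨_, h⟩ => h⟩
    by_cases hv : v ∈ S
    · refine SimpleGraph.starGlue_induce_connected (by simpa using hv) (fun C => ?_) fun C => ?_
      · exact Finset.mem_map_of_mem (.subtype _) (hr C ⟨v, Or.inr hv⟩ hv)
      · have := ((td C).bags_connected ⟨v, Or.inr hv⟩).preconnected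
        rw [hbranch C (Or.inr hv)] at this
        exact this
    · obtain ⟨C, hC, hvC⟩ := exists_isCompOf_mem G hv
      refine SimpleGraph.starGlue_induce_connected_of_branch (c := ⟨C, hC⟩) ?_ ?_
      · rintro (_ | ⟨⟨D, hD⟩, i⟩) hx
        · exact absurd (by simpa using hx) hv
        · obtain ⟨y, -, rfl⟩ := Finset.mem_map.1 hx
          obtain rfl := hC.eq_of_mem hD hvC (y.2.resolve_right hv)
          exact ⟨i, rfl⟩
      · have := (td ⟨C, hC⟩).bags_connected ⟨v, Or.inl hvC⟩
        rw [hbranch ⟨C, hC⟩ (Or.inl hvC)] at this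
        exact this

lemma treewidth_sup_completeOn_le [Fintype V] {G : SimpleGraph V} {S : Set V} {k : ℕ}
    (hS : S.ncard ≤ k + 1) (hk : ∀ C, IsCompOf G S C → treewidth (torso G S C) ≤ k) :
    treewidth (G ⊔ completeOn S) ≤ k := by
  classical
  choose ι td htd using fun C : {C // IsCompOf G S C} =>
    exists_treeDecomp_card_le_treewidth (torso G S C.1)
  have hroot : ∀ C, ∃ i, ∀ x : ↑(C.1 ∪ S), (x : V) ∈ S → x ∈ (td C).bag i := by
    intro C
    obtain ⟨i, hi⟩ := (td C).exists_clique_subset_bag {x | (x : V) ∈ S} (by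
      intro a ha b hb hab
      exact Or.inr (completeOn_adj.2 ⟨hab, by simpa using ha, by simpa using hb⟩))
    exact ⟨i, fun x hx => hi (by simpa using hx)⟩
  choose r hr using hroot
  refine treewidth_le_of_treeDecomp (TreeDecomp.glue td r hr) ?_
  rintro (_ | ⟨C, i⟩)
  · rw [Set.ncard_eq_toFinset_card S] at hS
    exact hS
  · exact (Finset.card_map _).trans_le
      ((htd C i).trans (Nat.add_le_add_right (hk C.1 C.2) 1))

end Treewidth

/-- if `S` is a safe separator of `G`, then `tw(G)` is the larger of
`|S| - 1` and the maximum over components `C` of `G - S` of `tw(G[C ∪ S] ∪ K(S))`. -/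
theorem treewidth_safe_separator {V : Type} [Fintype V] (G : SimpleGraph V)
    (S : Set V) (hsep : IsSeparator G S)
    (hsafe : treewidth (G ⊔ completeOn S) = treewidth G) :
    treewidth G = max (S.ncard - 1)
      (sSup {k : ℕ | ∃ C : Set V, IsCompOf G S C ∧
        k = treewidth ((G.induce (C ∪ S)) ⊔
              completeOn {x : ↑(C ∪ S) | (x : V) ∈ S})}) := by
  rw [← hsafe]
  have hle : ∀ C, treewidth (torso G S C) ≤ treewidth (G ⊔ completeOn S) := fun C =>
    treewidth_le_of_embedding (.subtype _) fun _ _ => torso_adj.1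
  apply le_antisymm
  · refine treewidth_sup_completeOn_le ?_ fun C hC => le_max_of_le_right ?_
    · have := le_max_left (S.ncard - 1) (sSup {k : ℕ | ∃ C : Set V, IsCompOf G S C ∧
        k = treewidth (torso G S C)})
      omega
    · refine le_csSup ⟨treewidth (G ⊔ completeOn S), ?_⟩ ⟨C, hC, rfl⟩
      rintro _ ⟨D, -, rfl⟩
      exact hle D
  · refine max_le (ncard_le_treewidth_of_isClique fun a ha b hb hab =>
      Or.inr (completeOn_adj.2 ⟨hab, ha, hb⟩)) ?_
    obtain ⟨C, -, hC, -, -⟩ := hsep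
    refine csSup_le ⟨_, C, hC, rfl⟩ ?_
    rintro _ ⟨D, -, rfl⟩
    exact hle D
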